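/- Let E be a collection of bricks over Λ. If the set {Filt(Gen(M)) : M ∈ E} is a canonical join representation in tors Λ (i.e. ⋁{Filt(Gen(M)) : M ∈ E} is the canonical join representation of its join), then every pair of modules M, M' in E is hom-orthogonal: Hom_Λ(M, M') = 0 and Hom_Λ(M', M) = 0. -/

import Mathlib

/-!
Common definitions: the category `mod Λ` of finite(-dimensional) left `Λ`-modules,
torsion(-free) classes, filtration closures, bricks, minimal (co-)extending modules,
and the lattice-theoretic notions for `tors Λ` (ordered by containment).
-/

/-- A bundled (left) `Λ`-module with carrier in `Type`. -/
structure Mdl (Λ : Type) [Ring Λ] : Type 1 where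
  carrier : Type
  [isAddCommGroup : AddCommGroup carrier]
  [isModule : Module Λ carrier]

attribute [instance] Mdl.isAddCommGroup Mdl.isModule

instance {Λ : Type} [Ring Λ] : CoeSort (Mdl Λ) Type :=
  ⟨Mdl.carrier⟩

variable (Λ : Type) [Ring Λ]

/-- Bundle a module. -/
def Mdl.of (X : Type) [AddCommGroup X] [Module Λ X] : Mdl Λ :=
  { carrier := X }

/-- `M` and `N` are isomorphic `Λ`-modules. -/
def MIso (M N : Mdl Λ) : Prop :=
  Nonempty (M.carrier ≃ₗ[Λ] N.carrier)

/-- `N` is a factor (quotient) module of `M`. -/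
def IsFactor (M N : Mdl Λ) : Prop :=
  ∃ f : M.carrier →ₗ[Λ] N.carrier, Function.Surjective f

/-- `N` is a proper factor of `M` (a quotient by a nonzero submodule). -/
def IsProperFactor (M N : Mdl Λ) : Prop :=
  ∃ f : M.carrier →ₗ[Λ] N.carrier, Function.Surjective f ∧ ¬ Function.Injective f

/-- `N` is (isomorphic to) a submodule of `M`. -/
def IsSubmoduleOf (N M : Mdl Λ) : Prop :=
  ∃ f : N.carrier →ₗ[Λ] M.carrier, Function.Injective f

/-- `N` is (isomorphic to) a proper submodule of `M`. -/
def IsProperSubmoduleOf (N M : Mdl Λ) : Prop :=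
  ∃ f : N.carrier →ₗ[Λ] M.carrier, Function.Injective f ∧ ¬ Function.Surjective f

/-- `D` is (isomorphic to) a direct summand of `N`. -/
def IsSummand (D N : Mdl Λ) : Prop :=
  ∃ (i : D.carrier →ₗ[Λ] N.carrier) (p : N.carrier →ₗ[Λ] D.carrier),
    p.comp i = LinearMap.id

/-- `0 → A --f--> M --g--> B → 0` is a short exact sequence. -/
def IsSES {A M B : Mdl Λ} (f : A.carrier →ₗ[Λ] M.carrier)
    (g : M.carrier →ₗ[Λ] B.carrier) : Prop :=
  Function.Injective f ∧ Function.Surjective g ∧ LinearMap.range f = LinearMap.ker g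

/-- The short exact sequence `0 → A --f--> M --g--> B → 0` splits. -/
def SplitsSES {A M B : Mdl Λ} (_f : A.carrier →ₗ[Λ] M.carrier)
    (g : M.carrier →ₗ[Λ] B.carrier) : Prop :=
  ∃ s : B.carrier →ₗ[Λ] M.carrier, g.comp s = LinearMap.id

/-- `M` is an extension of `B` by `A`, i.e. there is a s.e.s. `0 → A → M → B → 0`. -/
def ExtOf (M A B : Mdl Λ) : Prop :=
  ∃ (f : A.carrier →ₗ[Λ] M.carrier) (g : M.carrier →ₗ[Λ] B.carrier), IsSES Λ f g

/-- A torsion class in `mod Λ`: a class of finite(-dimensional) modules containing `0`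
and closed under isomorphisms, factor modules and extensions. -/
structure IsTorsionClass (T : Set (Mdl Λ)) : Prop where
  fin : ∀ M ∈ T, Module.Finite Λ M.carrier
  zero_mem : ∀ M : Mdl Λ, Subsingleton M.carrier → M ∈ T
  iso_closed : ∀ M ∈ T, ∀ N : Mdl Λ, MIso Λ M N → N ∈ T
  factor_closed : ∀ M ∈ T, ∀ N : Mdl Λ, IsFactor Λ M N → N ∈ T
  ext_closed : ∀ A ∈ T, ∀ B ∈ T, ∀ M : Mdl Λ, ExtOf Λ M A B → M ∈ T

/-- A torsion-free class in `mod Λ`: a class of finite(-dimensional) modules containing `0`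
and closed under isomorphisms, submodules and extensions. -/
structure IsTorsionFreeClass (F : Set (Mdl Λ)) : Prop where
  fin : ∀ M ∈ F, Module.Finite Λ M.carrier
  zero_mem : ∀ M : Mdl Λ, Subsingleton M.carrier → M ∈ F
  iso_closed : ∀ M ∈ F, ∀ N : Mdl Λ, MIso Λ M N → N ∈ F
  sub_closed : ∀ M ∈ F, ∀ N : Mdl Λ, IsSubmoduleOf Λ N M → N ∈ F
  ext_closed : ∀ A ∈ F, ∀ B ∈ F, ∀ M : Mdl Λ, ExtOf Λ M A B → M ∈ F

/-- `Filt S M`: `M` admits a filtration `0 = M₀ ⊆ M₁ ⊆ ⋯ ⊆ M_l = M` whose successive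
quotients are isomorphic to modules in `S`. -/
inductive Filt (S : Set (Mdl Λ)) : Mdl Λ → Prop
  | of_subsingleton (M : Mdl Λ) (h : Subsingleton M.carrier) : Filt S M
  | step (M : Mdl Λ) (N : Submodule Λ M.carrier) (X : Mdl Λ) (hX : X ∈ S)
      (hN : Filt S (Mdl.of Λ N)) (e : Nonempty ((M.carrier ⧸ N) ≃ₗ[Λ] X.carrier)) :
      Filt S M

/-- The filtration closure `Filt(S)` as a set of modules. -/
def FiltSet (S : Set (Mdl Λ)) : Set (Mdl Λ) := {M | Filt Λ S M}

/-- `Gen(M)`: the class of factor modules of finite direct sums of copies of `M`. -/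
def GenSet (M : Mdl Λ) : Set (Mdl Λ) :=
  {N | ∃ (n : ℕ) (f : (Fin n → M.carrier) →ₗ[Λ] N.carrier), Function.Surjective f}

/-- `T^⊥ = {X ∈ mod Λ : Hom_Λ(N, X) = 0 for all N ∈ T}`. -/
def Perp (T : Set (Mdl Λ)) : Set (Mdl Λ) :=
  {X | Module.Finite Λ X.carrier ∧ ∀ N ∈ T, ∀ f : N.carrier →ₗ[Λ] X.carrier, f = 0}

/-- A brick: a module (in `mod Λ`) whose endomorphism ring is a division ring,
i.e. it is nonzero and every nonzero endomorphism is invertible. -/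
def IsBrick (M : Mdl Λ) : Prop :=
  Module.Finite Λ M.carrier ∧ Nontrivial M.carrier ∧
    ∀ f : M.carrier →ₗ[Λ] M.carrier, f ≠ 0 → Function.Bijective f

/-- An indecomposable module: nonzero, and not the direct sum of two nonzero submodules. -/
def Indec (M : Mdl Λ) : Prop :=
  Nontrivial M.carrier ∧
    ∀ p q : Submodule Λ M.carrier, IsCompl p q → p = ⊥ ∨ q = ⊥

/-- `M` is a minimal extending module for the torsion class `T`:
(P1) every proper factor of `M` is in `T`;
(P2) if `0 → M → X → N → 0` is non-split exact with `N ∈ T`, then `X ∈ T`;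
(P3) `Hom_Λ(T, M) = 0`. -/
structure IsMinExt (T : Set (Mdl Λ)) (M : Mdl Λ) : Prop where
  fin : Module.Finite Λ M.carrier
  p1 : ∀ N : Mdl Λ, IsProperFactor Λ M N → N ∈ T
  p2 : ∀ (X N : Mdl Λ) (f : M.carrier →ₗ[Λ] X.carrier) (g : X.carrier →ₗ[Λ] N.carrier),
      IsSES Λ f g → ¬ SplitsSES Λ f g → N ∈ T → X ∈ T
  p3 : ∀ N ∈ T, ∀ f : N.carrier →ₗ[Λ] M.carrier, f = 0

/-- `M` is a minimal co-extending module for the torsion-free class `F`: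
(P1') every proper submodule of `M` is in `F`;
(P2') if `0 → F' → X → M → 0` is non-split exact with `F' ∈ F`, then `X ∈ F`;
(P3') `Hom_Λ(M, F) = 0`. -/
structure IsMinCoExt (F : Set (Mdl Λ)) (M : Mdl Λ) : Prop where
  fin : Module.Finite Λ M.carrier
  p1 : ∀ N : Mdl Λ, IsProperSubmoduleOf Λ N M → N ∈ F
  p2 : ∀ (X F' : Mdl Λ) (f : F'.carrier →ₗ[Λ] X.carrier) (g : X.carrier →ₗ[Λ] M.carrier),
      IsSES Λ f g → ¬ SplitsSES Λ f g → F' ∈ F → X ∈ F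
  p3 : ∀ F' ∈ F, ∀ f : M.carrier →ₗ[Λ] F'.carrier, f = 0

/-- `T'` covers `T` in the lattice `tors Λ` of torsion classes ordered by containment. -/
def TorsCovers (T' T : Set (Mdl Λ)) : Prop :=
  IsTorsionClass Λ T' ∧ IsTorsionClass Λ T ∧ T ⊂ T' ∧
    ∀ Y : Set (Mdl Λ), IsTorsionClass Λ Y → T ⊂ Y → Y ⊆ T' → Y = T'

/-- `F'` covers `F` in the lattice `torf Λ` of torsion-free classes ordered by containment. -/
def TorfCovers (F' F : Set (Mdl Λ)) : Prop :=
  IsTorsionFreeClass Λ F' ∧ IsTorsionFreeClass Λ F ∧ F ⊂ F' ∧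
    ∀ Y : Set (Mdl Λ), IsTorsionFreeClass Λ Y → F ⊂ Y → Y ⊆ F' → Y = F'

/-- The join `⋁ A` of a family of torsion classes in `tors Λ`: the smallest torsion
class containing all members of `A`. -/
def TorsJoin (A : Set (Set (Mdl Λ))) : Set (Mdl Λ) :=
  ⋂₀ {T : Set (Mdl Λ) | IsTorsionClass Λ T ∧ ∀ S ∈ A, S ⊆ T}

/-- A completely join-irreducible element of `tors Λ`: a torsion class `T` such that
`T ∈ A` whenever `A` is a set of torsion classes with `⋁ A = T`. -/
def CompletelyJoinIrred (T : Set (Mdl Λ)) : Prop :=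
  IsTorsionClass Λ T ∧
    ∀ A : Set (Set (Mdl Λ)), (∀ S ∈ A, IsTorsionClass Λ S) → TorsJoin Λ A = T → T ∈ A

/-- The join representation `⋁ A` is irredundant in `tors Λ`:
every proper subset has strictly smaller join. -/
def TorsIrredundant (A : Set (Set (Mdl Λ))) : Prop :=
  ∀ B : Set (Set (Mdl Λ)), B ⊂ A → TorsJoin Λ B ⊂ TorsJoin Λ A

/-- `A` is the canonical join representation of its join in `tors Λ` (equivalently, a face
of the canonical join complex `Γ(tors Λ)`): `⋁ A` is irredundant, and `A ≪ B` for every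
irredundant join representation `⋁ B` of the same element. -/
def TorsCJR (A : Set (Set (Mdl Λ))) : Prop :=
  (∀ S ∈ A, IsTorsionClass Λ S) ∧ TorsIrredundant Λ A ∧
    ∀ B : Set (Set (Mdl Λ)), (∀ S ∈ B, IsTorsionClass Λ S) →
      TorsJoin Λ B = TorsJoin Λ A → TorsIrredundant Λ B → ∀ a ∈ A, ∃ b ∈ B, a ⊆ b

/-- `M` and `N` are hom-orthogonal: `Hom_Λ(M, N) = 0` and `Hom_Λ(N, M) = 0`. -/
def HomOrthogonal (M N : Mdl Λ) : Prop :=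
  (∀ f : M.carrier →ₗ[Λ] N.carrier, f = 0) ∧ ∀ f : N.carrier →ₗ[Λ] M.carrier, f = 0

/-!
Let `A` be the canonical join representation of `w`. Then each `a ∈ A` is the least torsion class
`U` with `U ∨ ⋁ (A \ {a}) = w`: unless `U = w`, the pair `{U, ⋁ (A \ {a})}` is irredundant, and
`a` does not lie below `⋁ (A \ {a})`.

Suppose `a = Filt(Gen(M'))` with `M'` a brick, and some `X` in another member of `A` has a nonzero
map to `M'`, with image `I`. Let `U` be the class of all modules in `w` without nonzero maps to
`M'`. It contains `M' ⧸ I`, because a nonzero endomorphism of `M'` cannot kill `I`. As `M'` is an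
extension of `M' ⧸ I ∈ U` by `I ∈ ⋁ (A \ {a})`, the join of these two classes is `w`, so that
`M' ∈ a ⊆ U`, which is absurd.
-/

section

variable {Λ}

namespace IsTorsionClass

variable {T T' : Set (Mdl Λ)}

theorem mem_of_submodule (hT : IsTorsionClass Λ T) {M : Mdl Λ} (N : Submodule Λ M)
    (hN : Mdl.of Λ N ∈ T) (hQ : Mdl.of Λ (M ⧸ N) ∈ T) : M ∈ T :=
  hT.ext_closed _ hN _ hQ M ⟨N.subtype, N.mkQ, N.injective_subtype, N.mkQ_surjective,
    N.range_subtype.trans N.ker_mkQ.symm⟩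

theorem prod_mem (hT : IsTorsionClass Λ T) {M N : Mdl Λ} (hM : M ∈ T) (hN : N ∈ T) :
    Mdl.of Λ (M × N) ∈ T :=
  hT.ext_closed M hM N hN _ ⟨LinearMap.inl Λ M N, LinearMap.snd Λ M N, LinearMap.inl_injective,
    LinearMap.snd_surjective, LinearMap.range_inl Λ M N⟩

theorem pow_mem (hT : IsTorsionClass Λ T) {M : Mdl Λ} (hM : M ∈ T) (n : ℕ) :
    Mdl.of Λ (Fin n → M) ∈ T := by
  induction n with
  | zero => exact hT.zero_mem _ (inferInstanceAs (Subsingleton (Fin 0 → M)))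
  | succ n ih =>
    exact hT.iso_closed _ (hT.prod_mem hM ih) _ ⟨Fin.consLinearEquiv Λ fun _ : Fin (n + 1) ↦ M⟩

theorem genSet_subset (hT : IsTorsionClass Λ T) {M : Mdl Λ} (hM : M ∈ T) : GenSet Λ M ⊆ T :=
  fun N ⟨n, hN⟩ ↦ hT.factor_closed _ (hT.pow_mem hM n) N hN

theorem filtSet_subset (hT : IsTorsionClass Λ T) {S : Set (Mdl Λ)} (hS : S ⊆ T) :
    FiltSet Λ S ⊆ T := by
  intro M hM
  induction hM with
  | of_subsingleton M h => exact hT.zero_mem M h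
  | step M N X hX _ e ih =>
    obtain ⟨e⟩ := e
    exact hT.mem_of_submodule N ih (hT.iso_closed X (hS hX) _ ⟨e.symm⟩)

theorem filtSet_genSet_subset (hT : IsTorsionClass Λ T) {M : Mdl Λ} (hM : M ∈ T) :
    FiltSet Λ (GenSet Λ M) ⊆ T :=
  hT.filtSet_subset (hT.genSet_subset hM)

theorem inter (hT : IsTorsionClass Λ T) (hT' : IsTorsionClass Λ T') :
    IsTorsionClass Λ (T ∩ T') where
  fin M hM := hT.fin M hM.1
  zero_mem M hM := ⟨hT.zero_mem M hM, hT'.zero_mem M hM⟩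
  iso_closed M hM N e := ⟨hT.iso_closed M hM.1 N e, hT'.iso_closed M hM.2 N e⟩
  factor_closed M hM N f := ⟨hT.factor_closed M hM.1 N f, hT'.factor_closed M hM.2 N f⟩
  ext_closed A hA B hB M e :=
    ⟨hT.ext_closed A hA.1 B hB.1 M e, hT'.ext_closed A hA.2 B hB.2 M e⟩

end IsTorsionClass

theorem subset_filtSet (S : Set (Mdl Λ)) : S ⊆ FiltSet Λ S := fun M hM ↦
  Filt.step M ⊥ M hM (Filt.of_subsingleton _ (inferInstanceAs (Subsingleton (⊥ : Submodule Λ M))))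
    ⟨Submodule.quotEquivOfEqBot ⊥ rfl⟩

theorem self_mem_genSet (M : Mdl Λ) : M ∈ GenSet Λ M :=
  ⟨1, LinearMap.proj 0, LinearMap.proj_surjective 0⟩

theorem self_mem_filtSet_genSet (M : Mdl Λ) : M ∈ FiltSet Λ (GenSet Λ M) :=
  subset_filtSet _ (self_mem_genSet M)

theorem IsSES.finite {A M B : Mdl Λ} {i : A →ₗ[Λ] M} {p : M →ₗ[Λ] B} (h : IsSES Λ i p)
    [Module.Finite Λ A] [Module.Finite Λ B] : Module.Finite Λ M :=
  Module.Finite.of_exact (LinearMap.exact_iff.2 h.2.2.symm) h.2.1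

theorem IsSES.hom_eq_zero {A M B Y : Mdl Λ} {i : A →ₗ[Λ] M} {p : M →ₗ[Λ] B} (h : IsSES Λ i p)
    (hA : ∀ f : A →ₗ[Λ] Y, f = 0) (hB : ∀ f : B →ₗ[Λ] Y, f = 0) (g : M →ₗ[Λ] Y) : g = 0 := by
  have hexact : Function.Exact i p := LinearMap.exact_iff.2 h.2.2.symm
  have hg : LinearMap.range i ≤ LinearMap.ker g := LinearMap.range_le_ker_iff.2 (hA (g ∘ₗ i))
  have hfactor : (LinearMap.range i).liftQ g hg ∘ₗ
      (hexact.linearEquivOfSurjective h.2.1).symm.toLinearMap ∘ₗ p = g := by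
    ext x
    simp
  rw [← hfactor, ← LinearMap.comp_assoc, hB (_ ∘ₗ _), LinearMap.zero_comp]

theorem isTorsionClass_finite : IsTorsionClass Λ {M : Mdl Λ | Module.Finite Λ M} where
  fin _ hM := hM
  zero_mem M _ := inferInstanceAs (Module.Finite Λ M)
  iso_closed _ (_ : Module.Finite Λ _) _ := fun ⟨e⟩ ↦ Module.Finite.equiv e
  factor_closed _ (_ : Module.Finite Λ _) _ := fun ⟨f, hf⟩ ↦ Module.Finite.of_surjective f hf
  ext_closed _ (_ : Module.Finite Λ _) _ (_ : Module.Finite Λ _) _ := fun ⟨_, _, h⟩ ↦ h.finite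

/-- The left perpendicular class `^⊥Y = {X ∈ mod Λ : Hom_Λ(X, Y) = 0}` of a single module, the
largest torsion class without nonzero maps to `Y`. -/
def LeftPerp (Y : Mdl Λ) : Set (Mdl Λ) :=
  {X | Module.Finite Λ X ∧ ∀ f : X →ₗ[Λ] Y, f = 0}

namespace LeftPerp

variable {X X' Y : Mdl Λ}

theorem mem_of_isFactor (hX : X ∈ LeftPerp Y) (h : IsFactor Λ X X') : X' ∈ LeftPerp Y := by
  refine ⟨isTorsionClass_finite.factor_closed X hX.1 X' h, fun g ↦ ?_⟩
  obtain ⟨f, hf⟩ := h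
  rw [← LinearMap.cancel_right hf, hX.2 (g ∘ₗ f), LinearMap.zero_comp]

theorem isTorsionClass (Y : Mdl Λ) : IsTorsionClass Λ (LeftPerp Y) where
  fin _ hX := hX.1
  zero_mem X hX := ⟨isTorsionClass_finite.zero_mem X hX, fun _ ↦ Subsingleton.elim _ _⟩
  iso_closed _ hX _ := fun ⟨e⟩ ↦ mem_of_isFactor hX ⟨e, e.surjective⟩
  factor_closed _ hX _ h := mem_of_isFactor hX h
  ext_closed A hA B hB X h := by
    refine ⟨isTorsionClass_finite.ext_closed A hA.1 B hB.1 X h, ?_⟩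
    obtain ⟨i, p, hip⟩ := h
    exact hip.hom_eq_zero hA.2 hB.2

theorem self_notMem [Nontrivial Y] : Y ∉ LeftPerp Y := fun h ↦
  LinearMap.ne_zero_of_surjective Function.surjective_id (h.2 LinearMap.id)

end LeftPerp

theorem exists_hom_ne_zero_of_mem_filtSet_genSet {M X Y : Mdl Λ} [Module.Finite Λ M]
    (hX : X ∈ FiltSet Λ (GenSet Λ M)) {g : X →ₗ[Λ] Y} (hg : g ≠ 0) :
    ∃ h : M →ₗ[Λ] Y, h ≠ 0 := by
  by_contra! hM
  exact hg (((LeftPerp.isTorsionClass Y).filtSet_genSet_subset ⟨inferInstance, hM⟩ hX).2 g)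

namespace IsBrick

variable {M N : Mdl Λ}

theorem quotient_mem_leftPerp (hM : IsBrick Λ M) {I : Submodule Λ M} (hI : I ≠ ⊥) :
    Mdl.of Λ (M ⧸ I) ∈ LeftPerp M := by
  have hom_eq_zero (g : M ⧸ I →ₗ[Λ] M) : g = 0 := by
    have hcomp : g ∘ₗ I.mkQ = 0 := by
      by_contra hne
      refine hI (le_bot_iff.1 ?_)
      calc I = LinearMap.ker I.mkQ := I.ker_mkQ.symm
        _ ≤ LinearMap.ker (g ∘ₗ I.mkQ) := LinearMap.ker_le_ker_comp _ _
        _ = ⊥ := LinearMap.ker_eq_bot.2 (hM.2.2 _ hne).1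
    rwa [← LinearMap.cancel_right I.mkQ_surjective, LinearMap.zero_comp]
  exact ⟨isTorsionClass_finite.factor_closed M hM.1 _ ⟨I.mkQ, I.mkQ_surjective⟩, hom_eq_zero⟩

theorem surjective_of_mem_filtSet_genSet (hM : IsBrick Λ M) {X : Mdl Λ}
    (hX : X ∈ FiltSet Λ (GenSet Λ M)) {f : X →ₗ[Λ] M} (hf : f ≠ 0) : Function.Surjective f := by
  have := hM.1
  have hrange : f.rangeRestrict ≠ 0 := fun h ↦
    hf <| LinearMap.ext fun x ↦ congrArg Subtype.val (LinearMap.congr_fun h x)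
  obtain ⟨h, hh⟩ : ∃ h : M →ₗ[Λ] LinearMap.range f, h ≠ 0 :=
    exists_hom_ne_zero_of_mem_filtSet_genSet (Y := Mdl.of Λ (LinearMap.range f)) hX hrange
  have hne : (LinearMap.range f).subtype ∘ₗ h ≠ 0 := fun h0 ↦ hh <| by
    rwa [← LinearMap.cancel_left (Submodule.injective_subtype _), LinearMap.comp_zero]
  intro y
  obtain ⟨x, rfl⟩ := (hM.2.2 _ hne).2 y
  exact (h x).2

theorem exists_surjective_of_mem_filtSet_genSet (hM : IsBrick Λ M) [Module.Finite Λ N]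
    (hMN : M ∈ FiltSet Λ (GenSet Λ N)) (hNM : N ∈ FiltSet Λ (GenSet Λ M)) :
    ∃ f : N →ₗ[Λ] M, Function.Surjective f := by
  have := hM.2.1
  have hid : (LinearMap.id : M →ₗ[Λ] M) ≠ 0 :=
    LinearMap.ne_zero_of_surjective Function.surjective_id
  obtain ⟨f, hf⟩ := exists_hom_ne_zero_of_mem_filtSet_genSet hMN hid
  exact ⟨f, hM.surjective_of_mem_filtSet_genSet hNM hf⟩

theorem mIso_of_mem_filtSet_genSet (hM : IsBrick Λ M) (hN : IsBrick Λ N)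
    (hMN : M ∈ FiltSet Λ (GenSet Λ N)) (hNM : N ∈ FiltSet Λ (GenSet Λ M)) : MIso Λ M N := by
  have := hM.1
  have := hN.1
  have := hM.2.1
  obtain ⟨f, hf⟩ := hN.exists_surjective_of_mem_filtSet_genSet hNM hMN
  obtain ⟨g, hg⟩ := hM.exists_surjective_of_mem_filtSet_genSet hMN hNM
  have hgf : g ∘ₗ f ≠ 0 := LinearMap.ne_zero_of_surjective (hg.comp hf)
  have hinj : Function.Injective (g ∘ f) := (hM.2.2 _ hgf).1
  exact ⟨LinearEquiv.ofBijective f ⟨hinj.of_comp, hf⟩⟩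

end IsBrick

section Join

variable {A : Set (Set (Mdl Λ))} {S T : Set (Mdl Λ)}

theorem subset_torsJoin (hS : S ∈ A) : S ⊆ TorsJoin Λ A := fun _ hM _ hT ↦ hT.2 S hS hM

theorem torsJoin_subset (hT : IsTorsionClass Λ T) (h : ∀ S ∈ A, S ⊆ T) : TorsJoin Λ A ⊆ T :=
  fun _ hM ↦ hM T ⟨hT, h⟩

theorem isTorsionClass_torsJoin (hA : ∀ S ∈ A, IsTorsionClass Λ S) :
    IsTorsionClass Λ (TorsJoin Λ A) where
  fin _ hM := hM _ ⟨isTorsionClass_finite, fun S hS ↦ (hA S hS).fin⟩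
  zero_mem M hM _ hT := hT.1.zero_mem M hM
  iso_closed M hM N e T hT := hT.1.iso_closed M (hM T hT) N e
  factor_closed M hM N f T hT := hT.1.factor_closed M (hM T hT) N f
  ext_closed M hM N hN X e T hT := hT.1.ext_closed M (hM T hT) N (hN T hT) X e

theorem torsJoin_subset_of_sdiff (hT : IsTorsionClass Λ T) (hS : S ⊆ T)
    (h : TorsJoin Λ (A \ {S}) ⊆ T) : TorsJoin Λ A ⊆ T :=
  torsJoin_subset hT fun R hR ↦ by
    rcases eq_or_ne R S with rfl | hRS
    · exact hS
    · exact (subset_torsJoin (Set.mem_sdiff_singleton.2 ⟨hR, hRS⟩)).trans h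

theorem TorsIrredundant.not_subset_torsJoin_sdiff (hirr : TorsIrredundant Λ A)
    (hA : ∀ S ∈ A, IsTorsionClass Λ S) (hS : S ∈ A) : ¬ S ⊆ TorsJoin Λ (A \ {S}) := fun h ↦
  (hirr _ (Set.sdiff_singleton_ssubset.2 hS)).2 <|
    torsJoin_subset_of_sdiff (isTorsionClass_torsJoin fun R hR ↦ hA R hR.1) h subset_rfl

theorem isTorsionClass_of_mem_pair (hS : IsTorsionClass Λ S) (hT : IsTorsionClass Λ T) :
    ∀ R ∈ ({S, T} : Set (Set (Mdl Λ))), IsTorsionClass Λ R := by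
  rintro R (rfl | rfl) <;> assumption

theorem torsJoin_pair_sdiff_eq (hA : ∀ S ∈ A, IsTorsionClass Λ S) (hT : IsTorsionClass Λ T)
    (hTA : T ⊆ TorsJoin Λ A) (hS : S ⊆ TorsJoin Λ {TorsJoin Λ (A \ {S}), T}) :
    TorsJoin Λ {TorsJoin Λ (A \ {S}), T} = TorsJoin Λ A := by
  have hw : IsTorsionClass Λ (TorsJoin Λ A) := isTorsionClass_torsJoin hA
  have hJ : IsTorsionClass Λ (TorsJoin Λ (A \ {S})) :=
    isTorsionClass_torsJoin fun R hR ↦ hA R hR.1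
  refine Set.Subset.antisymm (torsJoin_subset hw ?_) <| torsJoin_subset_of_sdiff
    (isTorsionClass_torsJoin (isTorsionClass_of_mem_pair hJ hT)) hS
    (subset_torsJoin (Set.mem_insert _ _))
  rintro R (rfl | rfl)
  · exact torsJoin_subset hw fun R hR ↦ subset_torsJoin hR.1
  · exact hTA

theorem torsIrredundant_pair (hS : IsTorsionClass Λ S) (hT : IsTorsionClass Λ T)
    (hST : ¬ S ⊆ T) (hTS : ¬ T ⊆ S) : TorsIrredundant Λ {S, T} := by
  intro B hB
  have hB_le : TorsJoin Λ B ⊆ TorsJoin Λ {S, T} :=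
    torsJoin_subset (isTorsionClass_torsJoin (isTorsionClass_of_mem_pair hS hT))
      fun R hR ↦ subset_torsJoin (hB.1 hR)
  have hS_le : S ⊆ TorsJoin Λ {S, T} := subset_torsJoin (Set.mem_insert S {T})
  have hT_le : T ⊆ TorsJoin Λ {S, T} := subset_torsJoin (Set.mem_insert_of_mem S rfl)
  refine ⟨hB_le, fun hle ↦ ?_⟩
  obtain hBS | hBT : (∀ R ∈ B, R ⊆ S) ∨ ∀ R ∈ B, R ⊆ T := by
    rcases Set.subset_pair_iff_eq.1 hB.1 with rfl | rfl | rfl | rfl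
    · simp
    · simp
    · simp
    · exact absurd rfl hB.ne
  · exact hTS ((hT_le.trans hle).trans (torsJoin_subset hS hBS))
  · exact hST ((hS_le.trans hle).trans (torsJoin_subset hT hBT))

namespace TorsCJR

theorem subset_of_torsJoin_pair_eq (hA : TorsCJR Λ A) (hS : S ∈ A) {U : Set (Mdl Λ)}
    (hU : IsTorsionClass Λ U)
    (hjoin : TorsJoin Λ {TorsJoin Λ (A \ {S}), U} = TorsJoin Λ A) : S ⊆ U := by
  obtain ⟨htors, hirr, hcan⟩ := hA
  have hJ : IsTorsionClass Λ (TorsJoin Λ (A \ {S})) :=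
    isTorsionClass_torsJoin fun R hR ↦ htors R hR.1
  have hSJ := hirr.not_subset_torsJoin_sdiff htors hS
  have hS_le : S ⊆ TorsJoin Λ {TorsJoin Λ (A \ {S}), U} := hjoin ▸ subset_torsJoin hS
  by_cases hJU : TorsJoin Λ (A \ {S}) ⊆ U
  · exact hS_le.trans (torsJoin_subset hU (by simp [hJU]))
  · have hUJ : ¬ U ⊆ TorsJoin Λ (A \ {S}) := fun hUJ ↦
      hSJ (hS_le.trans (torsJoin_subset hJ (by simp [hUJ])))
    obtain ⟨R, rfl | rfl, hSR⟩ := hcan _ (isTorsionClass_of_mem_pair hJ hU) hjoin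
      (torsIrredundant_pair hJ hU hJU hUJ) S hS
    · exact absurd hSR hSJ
    · exact hSR

theorem hom_eq_zero (hA : TorsCJR Λ A) {N X : Mdl Λ} (hN : IsBrick Λ N)
    (hNA : FiltSet Λ (GenSet Λ N) ∈ A) (hT : T ∈ A) (hTN : T ≠ FiltSet Λ (GenSet Λ N))
    (hX : X ∈ T) (f : X →ₗ[Λ] N) : f = 0 := by
  by_contra hf
  have := hN.2.1
  set J := TorsJoin Λ (A \ {FiltSet Λ (GenSet Λ N)})
  set U := TorsJoin Λ A ∩ LeftPerp N
  set I := LinearMap.range f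
  have hw : IsTorsionClass Λ (TorsJoin Λ A) := isTorsionClass_torsJoin hA.1
  have hJ : IsTorsionClass Λ J := isTorsionClass_torsJoin fun R hR ↦ hA.1 R hR.1
  have hU : IsTorsionClass Λ U := hw.inter (LeftPerp.isTorsionClass N)
  have hJU : IsTorsionClass Λ (TorsJoin Λ {J, U}) :=
    isTorsionClass_torsJoin (isTorsionClass_of_mem_pair hJ hU)
  have hIJ : Mdl.of Λ I ∈ J :=
    hJ.factor_closed X (subset_torsJoin (Set.mem_sdiff_singleton.2 ⟨hT, hTN⟩) hX) _
      ⟨f.rangeRestrict, f.surjective_rangeRestrict⟩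
  have hQU : Mdl.of Λ (N ⧸ I) ∈ U :=
    ⟨hw.factor_closed N (subset_torsJoin hNA (self_mem_filtSet_genSet N)) _
      ⟨I.mkQ, I.mkQ_surjective⟩, hN.quotient_mem_leftPerp (LinearMap.range_eq_bot.not.2 hf)⟩
  have hN_mem : N ∈ TorsJoin Λ {J, U} :=
    hJU.mem_of_submodule I (subset_torsJoin (Set.mem_insert J {U}) hIJ)
      (subset_torsJoin (Set.mem_insert_of_mem J (Set.mem_singleton U)) hQU)
  have hjoin : TorsJoin Λ {J, U} = TorsJoin Λ A :=
    torsJoin_pair_sdiff_eq hA.1 hU Set.inter_subset_left (hJU.filtSet_genSet_subset hN_mem)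
  have hNU : N ∈ U := hA.subset_of_torsJoin_pair_eq hNA hU hjoin (self_mem_filtSet_genSet N)
  exact LeftPerp.self_notMem hNU.2

end TorsCJR

end Join

theorem statement17_general (E : Set (Mdl Λ)) (hE : ∀ M ∈ E, IsBrick Λ M)
    (hnoniso : ∀ M ∈ E, ∀ M' ∈ E, M ≠ M' → ¬ MIso Λ M M')
    (hcjr : TorsCJR Λ ((fun M : Mdl Λ => FiltSet Λ (GenSet Λ M)) '' E)) :
    ∀ M ∈ E, ∀ M' ∈ E, M ≠ M' → HomOrthogonal Λ M M' := by
  have hom_eq_zero : ∀ M ∈ E, ∀ M' ∈ E, M ≠ M' → ∀ f : M →ₗ[Λ] M', f = 0 := by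
    intro M hM M' hM' hne
    have hT : FiltSet Λ (GenSet Λ M) ≠ FiltSet Λ (GenSet Λ M') := fun h ↦
      hnoniso M hM M' hM' hne <| (hE M hM).mIso_of_mem_filtSet_genSet (hE M' hM')
        (h ▸ self_mem_filtSet_genSet M) (h ▸ self_mem_filtSet_genSet M')
    exact hcjr.hom_eq_zero (hE M' hM') (Set.mem_image_of_mem _ hM') (Set.mem_image_of_mem _ hM) hT
      (self_mem_filtSet_genSet M)
  exact fun M hM M' hM' hne ↦ ⟨hom_eq_zero M hM M' hM' hne, hom_eq_zero M' hM' M hM hne.symm⟩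

end

/-- Let `E` be a collection of (pairwise non-isomorphic) bricks over
`Λ`.  If `{Filt(Gen(M)) : M ∈ E}` is a canonical join representation in `tors Λ`, then
every pair of distinct modules of `E` is hom-orthogonal. -/
theorem statement17 (k : Type) [Field k] (Λ : Type) [Ring Λ] [Algebra k Λ]
    [FiniteDimensional k Λ] (E : Set (Mdl Λ)) (hE : ∀ M ∈ E, IsBrick Λ M)
    (hnoniso : ∀ M ∈ E, ∀ M' ∈ E, M ≠ M' → ¬ MIso Λ M M')
    (hcjr : TorsCJR Λ ((fun M : Mdl Λ => FiltSet Λ (GenSet Λ M)) '' E)) :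
    ∀ M ∈ E, ∀ M' ∈ E, M ≠ M' → HomOrthogonal Λ M M' :=
  statement17_general E hE hnoniso hcjr
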